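/- Let k be an odd integer and let l, j be integers with 0 < l < j < k − l − j, and set m := gcd(l, j, k). Then every vertex of ℤ/kℤ has exactly 6 neighbours in S_{l,j,k} (for the vertex 0 these are l, j, l+j, k−l, k−j, k−l−j, which are pairwise distinct and nonzero), every 2-element subset contained in some member of S_{l,j,k} is contained in exactly two members of S_{l,j,k}, S_{l,j,k} has exactly 2k members and 3k such 2-element subsets (so its Euler characteristic k − 3k + 2k equals 0), and S_{l,j,k} has exactly m connected components, each with k/m vertices, which are pairwise combinatorially isomorphic. -/

import Mathlib

/-- The difference cycle `(a : b : c)` (with `c = n - a - b`) on `ℤ/nℤ`: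
the collection of subsets of the form `{i, i + a, i + a + b}` for `i ∈ ℤ/nℤ`. -/
def dc (n a b : ℕ) : Set (Finset (ZMod n)) :=
  {s | ∃ i : ZMod n, s = {i, i + (a : ZMod n), i + (a : ZMod n) + (b : ZMod n)}}

/-- `S_{l,j,k}`: the union of the difference cycles `(l : j : k−l−j)` and
`(l : k−l−j : j)` on `ℤ/kℤ`. -/
def Sljk (k l j : ℕ) : Set (Finset (ZMod k)) := dc k l j ∪ dc k l (k - l - j)

/-- The graph on `ℤ/nℤ` whose edges are the 2-element subsets contained in some
member of `S`. -/
def cGraph (n : ℕ) (S : Set (Finset (ZMod n))) : SimpleGraph (ZMod n) :=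
  SimpleGraph.fromRel (fun v w => ∃ s ∈ S, v ∈ s ∧ w ∈ s)

/-! The triangles of `S_{l,j,k}` are those of the triangular lattice spanned by `a` and `b`, pushed
to `ℤ/kℤ` by `a ↦ l`, `b ↦ j`: the second difference cycle is the first one with `l` and `j`
exchanged. As long as `0, ±l, ±j, ±(l + j)` are distinct, the star of every vertex is embedded, and
since translations act transitively everything local can be counted at one vertex. The edge graph is
the Cayley graph of `l, j, l + j`, so its components are the cosets of the subgroup `⟨l, j⟩ =
⟨gcd(l, j, k)⟩`, which translations permute. -/

section Cayley

variable {G : Type*} [Group G] {s : Set G}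

open SimpleGraph

@[to_additive]
theorem mulCayley_reachable_mul_right (v : G) {g : G} (hg : g ∈ s) :
    (mulCayley s).Reachable v (v * g) := by
  by_cases h : v = v * g
  · rw [← h]
  · exact Adj.reachable ((mulCayley_adj' s _ _).2 ⟨h, g, hg, .inl rfl⟩)

@[to_additive]
theorem mulCayley_reachable_iff {v w : G} :
    (mulCayley s).Reachable v w ↔ v⁻¹ * w ∈ Subgroup.closure s := by
  constructor
  · rintro ⟨p⟩
    induction p with
    | nil => simp
    | @cons u v w huv _ ih =>
      have hstep : u⁻¹ * v ∈ Subgroup.closure s := by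
        rcases ((mulCayley_adj s u v).1 huv).2 with h | h
        · exact Subgroup.subset_closure h
        · simpa using inv_mem (Subgroup.subset_closure h)
      simpa [mul_assoc] using mul_mem hstep ih
  · suffices ∀ g ∈ Subgroup.closure s, ∀ v, (mulCayley s).Reachable v (v * g) from
      fun h => by simpa using this _ h v
    intro g hg
    induction hg using Subgroup.closure_induction with
    | mem g hg => exact fun v => mulCayley_reachable_mul_right v hg
    | one => simp
    | mul g h _ _ ihg ihh => exact fun v => by simpa [mul_assoc] using (ihg v).trans (ihh (v * g))
    | inv g _ ih => exact fun v => by simpa using (ih (v * g⁻¹)).symm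

@[to_additive]
theorem mulCayley_connectedComponentMk_eq_iff {v w : G} :
    (mulCayley s).connectedComponentMk v = (mulCayley s).connectedComponentMk w ↔
      v⁻¹ * w ∈ Subgroup.closure s :=
  ConnectedComponent.eq.trans mulCayley_reachable_iff

@[to_additive]
theorem mulCayley_card_connectedComponent :
    Nat.card (mulCayley s).ConnectedComponent = (Subgroup.closure s).index :=
  Nat.card_congr <| Quot.congr (Equiv.refl G) fun _ _ =>
    mulCayley_reachable_iff.trans QuotientGroup.leftRel_apply.symm

@[to_additive]
theorem mulCayley_card_connectedComponentMk_eq (c : (mulCayley s).ConnectedComponent) :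
    Nat.card {v // (mulCayley s).connectedComponentMk v = c} =
      Nat.card (Subgroup.closure s) := by
  obtain ⟨u, rfl⟩ := c.exists_rep
  refine Nat.card_congr ((Equiv.mulLeft u⁻¹).subtypeEquiv fun v => ?_)
  exact eq_comm.trans mulCayley_connectedComponentMk_eq_iff

@[to_additive]
theorem mulCayley_exists_mulLeft_connectedComponentMk (c c' : (mulCayley s).ConnectedComponent) :
    ∃ g : G, ∀ v, (mulCayley s).connectedComponentMk v = c →
      (mulCayley s).connectedComponentMk (g * v) = c' := by
  obtain ⟨u, rfl⟩ := c.exists_rep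
  obtain ⟨u', rfl⟩ := c'.exists_rep
  refine ⟨u' * u⁻¹, fun v hv => ?_⟩
  have huv := mulCayley_connectedComponentMk_eq_iff.1 hv
  refine mulCayley_connectedComponentMk_eq_iff.2 ?_
  simpa [mul_assoc] using huv

end Cayley

section TriangulatedTorus

variable {A : Type*} [AddCommGroup A] {a b d x y : A}

/-- The elements `0`, `±a`, `±b`, `±(a + b)` are pairwise distinct. This is what makes
`triangles a b` a closed surface with six neighbours at each vertex. -/
def IsGeneric (a b : A) : Prop := [0, a, b, a + b, -a, -b, -(a + b)].Nodup

theorem IsGeneric.symm (h : IsGeneric a b) : IsGeneric b a := by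
  simp only [IsGeneric, List.nodup_cons, List.mem_cons, List.not_mem_nil] at h ⊢
  grind

theorem IsGeneric.pairwise_ne (h : IsGeneric a b) :
    (a ≠ 0 ∧ b ≠ 0 ∧ a + b ≠ 0) ∧ (a ≠ b ∧ a ≠ -(a + b) ∧ b ≠ -(a + b)) ∧
      a ≠ -a ∧ b ≠ -b ∧ a + b ≠ -(a + b) := by
  simp only [IsGeneric, List.nodup_cons, List.mem_cons, List.not_mem_nil] at h
  grind

variable [DecidableEq A]

/-- The triangle through `x` whose first two edge vectors are `a` and `b`; the difference cycle
`(a : b : c)` consists of its translates. -/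
def triangle (a b x : A) : Finset A := {x, x + a, x + a + b}

/-- The quotient of the triangular lattice spanned by `a` and `b`: each parallelogram
`x, x + a, x + a + b, x + b` is cut along its diagonal from `x` to `x + a + b`. -/
def triangles (a b : A) : Set (Finset A) :=
  Set.range (triangle a b) ∪ Set.range (triangle b a)

/-- The three edge directions of `triangles a b`, each taken with one orientation. -/
def edgeSteps (a b : A) : Finset A := {a, b, a + b}

/-- The vertices adjacent to `0` in `triangles a b`. -/
def link (a b : A) : Finset A := {a, b, a + b, -a, -b, -(a + b)}

theorem mem_triangle : y ∈ triangle a b x ↔ y = x ∨ y = x + a ∨ y = x + a + b := by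
  simp [triangle]

theorem pair_subset_triangle {i : A} :
    {x, y} ⊆ triangle a b i ↔ x ∈ triangle a b i ∧ y ∈ triangle a b i := by
  simp [Finset.insert_subset_iff]

theorem mem_edgeSteps : d ∈ edgeSteps a b ↔ d = a ∨ d = b ∨ d = a + b := by
  simp [edgeSteps]

theorem edgeSteps_comm (a b : A) : edgeSteps a b = edgeSteps b a := by
  rw [edgeSteps, edgeSteps, Finset.insert_comm, add_comm]

theorem mem_link : d ∈ link a b ↔ d ∈ edgeSteps a b ∨ -d ∈ edgeSteps a b := by
  simp only [link, edgeSteps, Finset.mem_insert, Finset.mem_singleton, neg_eq_iff_eq_neg, or_assoc]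

theorem link_comm (a b : A) : link a b = link b a := by
  ext d
  rw [mem_link, mem_link, edgeSteps_comm]

theorem IsGeneric.card_link (h : IsGeneric a b) : (link a b).card = 6 := by
  simpa [link] using List.toFinset_card_of_nodup h.of_cons

theorem IsGeneric.zero_notMem_link (h : IsGeneric a b) : 0 ∉ link a b := by
  simpa [link] using h.notMem

theorem IsGeneric.card_edgeSteps (h : IsGeneric a b) : (edgeSteps a b).card = 3 := by
  obtain ⟨⟨ha, hb, -⟩, ⟨hab, -⟩, -⟩ := h.pairwise_ne
  exact Finset.card_eq_three.2 ⟨a, b, a + b, hab, by simpa using hb, by simpa using ha, rfl⟩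

theorem IsGeneric.ne_zero_of_mem_edgeSteps (h : IsGeneric a b) (hd : d ∈ edgeSteps a b) :
    d ≠ 0 := by
  rintro rfl
  exact h.zero_notMem_link (mem_link.2 (.inl hd))

theorem IsGeneric.ne_neg_of_mem_edgeSteps {d' : A} (h : IsGeneric a b) (hd : d ∈ edgeSteps a b)
    (hd' : d' ∈ edgeSteps a b) : d ≠ -d' := by
  have := h.pairwise_ne
  rw [mem_edgeSteps] at hd hd'
  grind

theorem image_add_left_triangle (t a b x : A) :
    (triangle a b x).image (t + ·) = triangle a b (t + x) := by
  simp [triangle, Finset.image_insert, add_assoc]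

theorem image_add_left_mem_triangles {s : Finset A} (hs : s ∈ triangles a b) (t : A) :
    s.image (t + ·) ∈ triangles a b := by
  rcases hs with ⟨x, rfl⟩ | ⟨x, rfl⟩
  · exact .inl ⟨t + x, (image_add_left_triangle ..).symm⟩
  · exact .inr ⟨t + x, (image_add_left_triangle ..).symm⟩

theorem image_add_left_mem_triangles_iff {s : Finset A} (t : A) :
    s.image (t + ·) ∈ triangles a b ↔ s ∈ triangles a b := by
  refine ⟨fun h => ?_, fun h => image_add_left_mem_triangles h t⟩
  simpa only [Finset.image_image, Function.comp_def, neg_add_cancel_left, Finset.image_id'] using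
    image_add_left_mem_triangles h (-t)

theorem sub_mem_link_of_mem_triangle {i : A} (hx : x ∈ triangle a b i) (hy : y ∈ triangle a b i)
    (hxy : x ≠ y) : y - x ∈ link a b := by
  simp only [mem_triangle, mem_link, mem_edgeSteps] at *
  grind

theorem sub_mem_link_of_mem_triangles {s : Finset A} (hs : s ∈ triangles a b) (hx : x ∈ s)
    (hy : y ∈ s) (hxy : x ≠ y) : y - x ∈ link a b := by
  rcases hs with ⟨i, rfl⟩ | ⟨i, rfl⟩
  · exact sub_mem_link_of_mem_triangle hx hy hxy
  · rw [link_comm]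
    exact sub_mem_link_of_mem_triangle hx hy hxy

theorem exists_pair_subset_triangle (hd : d ∈ edgeSteps a b) (x : A) :
    ∃ i, {x, x + d} ⊆ triangle a b i := by
  simp only [pair_subset_triangle, mem_triangle]
  rcases mem_edgeSteps.1 hd with rfl | rfl | rfl
  · exact ⟨x, by simp⟩
  · exact ⟨x - a, by simp⟩
  · exact ⟨x, by simp [add_assoc]⟩

theorem IsGeneric.existsUnique_pair_subset_triangle (h : IsGeneric a b)
    (hd : d ∈ edgeSteps a b) (x : A) : ∃! i, {x, x + d} ⊆ triangle a b i := by
  obtain ⟨i, hi⟩ := exists_pair_subset_triangle hd x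
  refine ⟨i, hi, fun i' hi' => ?_⟩
  have := h.pairwise_ne
  simp only [pair_subset_triangle, mem_triangle] at hi hi'
  rw [mem_edgeSteps] at hd
  grind

theorem IsGeneric.triangle_injective (h : IsGeneric a b) :
    Function.Injective (triangle a b) := by
  intro x y hxy
  have hx : {x, x + a} ⊆ triangle a b x := by simp [triangle]
  exact (h.existsUnique_pair_subset_triangle (mem_edgeSteps.2 (.inl rfl)) x).unique hx (hxy ▸ hx)

theorem IsGeneric.triangle_ne_triangle_swap (h : IsGeneric a b) (x y : A) :
    triangle a b x ≠ triangle b a y := by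
  intro hxy
  have hmem (z : A) : z ∈ triangle a b x ↔ z ∈ triangle b a y := by rw [hxy]
  have := h.pairwise_ne
  have := hmem x
  have := hmem (x + a)
  have := hmem (x + a + b)
  simp only [mem_triangle] at *
  grind

theorem IsGeneric.ncard_triangles [Finite A] (h : IsGeneric a b) :
    (triangles a b).ncard = 2 * Nat.card A := by
  have hdisj : Disjoint (Set.range (triangle a b)) (Set.range (triangle b a)) := by
    rw [Set.disjoint_range_iff]
    exact h.triangle_ne_triangle_swap
  rw [triangles, Set.ncard_union_eq hdisj, Set.ncard_range_of_injective h.triangle_injective,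
    Set.ncard_range_of_injective h.symm.triangle_injective, two_mul]

theorem IsGeneric.card_eq_two_and_subset_triangles_iff (h : IsGeneric a b) {e : Finset A} :
    (e.card = 2 ∧ ∃ s ∈ triangles a b, e ⊆ s) ↔ ∃ x, ∃ d ∈ edgeSteps a b, {x, x + d} = e := by
  constructor
  · rintro ⟨he, s, hs, hes⟩
    obtain ⟨x, y, hxy, rfl⟩ := Finset.card_eq_two.1 he
    obtain ⟨hx, hy⟩ := Finset.insert_subset_iff.1 hes
    have hlink := sub_mem_link_of_mem_triangles hs hx (Finset.singleton_subset_iff.1 hy) hxy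
    rcases mem_link.1 hlink with hd | hd
    · exact ⟨x, _, hd, by rw [add_sub_cancel]⟩
    · exact ⟨y, _, hd, by rw [neg_sub, add_sub_cancel, Finset.pair_comm]⟩
  · rintro ⟨x, d, hd, rfl⟩
    obtain ⟨i, hi⟩ := exists_pair_subset_triangle hd x
    have hd0 := h.ne_zero_of_mem_edgeSteps hd
    exact ⟨Finset.card_pair (by simpa [eq_comm] using hd0), _, .inl ⟨i, rfl⟩, hi⟩

theorem IsGeneric.ncard_triangles_of_subset (h : IsGeneric a b) {e : Finset A}
    (he : e.card = 2) (hes : ∃ s ∈ triangles a b, e ⊆ s) :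
    {s ∈ triangles a b | e ⊆ s}.ncard = 2 := by
  obtain ⟨x, d, hd, rfl⟩ := h.card_eq_two_and_subset_triangles_iff.1 ⟨he, hes⟩
  obtain ⟨i, hi, hi_unique⟩ := h.existsUnique_pair_subset_triangle hd x
  obtain ⟨j, hj, hj_unique⟩ :=
    h.symm.existsUnique_pair_subset_triangle (edgeSteps_comm a b ▸ hd) x
  refine Set.ncard_eq_two.2 ⟨_, _, h.triangle_ne_triangle_swap i j, Set.ext fun s => ⟨?_, ?_⟩⟩
  · rintro ⟨⟨y, rfl⟩ | ⟨y, rfl⟩, hy⟩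
    · exact .inl (congrArg _ (hi_unique y hy))
    · exact .inr (congrArg _ (hj_unique y hy))
  · rintro (rfl | rfl)
    · exact ⟨.inl ⟨i, rfl⟩, hi⟩
    · exact ⟨.inr ⟨j, rfl⟩, hj⟩

theorem pair_add_eq_pair_add {c : A} (h : ({x, x + c} : Finset A) = {y, y + d}) :
    (x = y ∧ c = d) ∨ c = -d := by
  have hmem (z : A) : z = x ∨ z = x + c ↔ z = y ∨ z = y + d := by
    simpa using Finset.ext_iff.1 h z
  have := hmem x
  have := hmem y
  have := hmem (x + c)
  have := hmem (y + d)
  grind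

theorem IsGeneric.ncard_edges [Finite A] (h : IsGeneric a b) :
    {e : Finset A | e.card = 2 ∧ ∃ s ∈ triangles a b, e ⊆ s}.ncard = 3 * Nat.card A := by
  have hedges : {e : Finset A | e.card = 2 ∧ ∃ s ∈ triangles a b, e ⊆ s} =
      (fun p : A × A => {p.1, p.1 + p.2}) '' (Set.univ ×ˢ ↑(edgeSteps a b)) := by
    ext e
    simp [h.card_eq_two_and_subset_triangles_iff]
  have hinj : Set.InjOn (fun p : A × A => ({p.1, p.1 + p.2} : Finset A))
      (Set.univ ×ˢ ↑(edgeSteps a b)) := by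
    rintro ⟨x, c⟩ ⟨-, hc⟩ ⟨y, d⟩ ⟨-, hd⟩ hxy
    exact Prod.ext_iff.2 <|
      (pair_add_eq_pair_add hxy).resolve_right (h.ne_neg_of_mem_edgeSteps hc hd)
  rw [hedges, hinj.ncard_image, Set.ncard_prod, Set.ncard_univ,
    Set.ncard_coe_finset, h.card_edgeSteps, mul_comm]

theorem exists_mem_triangles_iff_sub_mem_link (hxy : x ≠ y) :
    (∃ s ∈ triangles a b, x ∈ s ∧ y ∈ s) ↔ y - x ∈ link a b := by
  constructor
  · rintro ⟨s, hs, hx, hy⟩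
    exact sub_mem_link_of_mem_triangles hs hx hy hxy
  · have hedge (x y : A) (hd : y - x ∈ edgeSteps a b) : ∃ s ∈ triangles a b, x ∈ s ∧ y ∈ s := by
      obtain ⟨i, hi⟩ := exists_pair_subset_triangle hd x
      exact ⟨_, .inl ⟨i, rfl⟩, by simpa [pair_subset_triangle] using hi⟩
    intro hlink
    rcases mem_link.1 hlink with hd | hd
    · exact hedge x y hd
    · obtain ⟨s, hs, hy, hx⟩ := hedge y x (by rwa [← neg_sub])
      exact ⟨s, hs, hx, hy⟩

theorem addCayley_edgeSteps_adj :
    (SimpleGraph.addCayley (edgeSteps a b : Set A)).Adj x y ↔ x ≠ y ∧ y - x ∈ link a b := by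
  rw [SimpleGraph.addCayley_adj, mem_link, neg_sub, neg_add_eq_sub, neg_add_eq_sub,
    Finset.mem_coe, Finset.mem_coe]

theorem IsGeneric.addCayley_edgeSteps_adj_iff (h : IsGeneric a b) :
    (SimpleGraph.addCayley (edgeSteps a b : Set A)).Adj x y ↔ y - x ∈ link a b := by
  rw [addCayley_edgeSteps_adj, and_iff_right_iff_imp]
  rintro hlink rfl
  exact h.zero_notMem_link (by simpa using hlink)

theorem IsGeneric.ncard_addCayley_edgeSteps_adj (h : IsGeneric a b) (x : A) :
    {y | (SimpleGraph.addCayley (edgeSteps a b : Set A)).Adj x y}.ncard = 6 := by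
  have hneighbors : {y | (SimpleGraph.addCayley (edgeSteps a b : Set A)).Adj x y} =
      (x + ·) '' (link a b : Set A) := by
    ext y
    simp [h.addCayley_edgeSteps_adj_iff, neg_add_eq_sub]
  rw [hneighbors, (add_right_injective x).injOn.ncard_image, Set.ncard_coe_finset, h.card_link]

theorem closure_edgeSteps (a b : A) :
    AddSubgroup.closure (edgeSteps a b : Set A) =
      AddSubgroup.zmultiples a ⊔ AddSubgroup.zmultiples b := by
  rw [AddSubgroup.zmultiples_eq_closure, AddSubgroup.zmultiples_eq_closure,
    ← AddSubgroup.closure_union]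
  refine le_antisymm ((AddSubgroup.closure_le _).2 ?_) (AddSubgroup.closure_mono ?_)
  · intro d hd
    have ha := AddSubgroup.subset_closure (Set.mem_union_left {b} (Set.mem_singleton a))
    have hb := AddSubgroup.subset_closure (Set.mem_union_right {a} (Set.mem_singleton b))
    rcases mem_edgeSteps.1 hd with rfl | rfl | rfl
    exacts [ha, hb, add_mem ha hb]
  · simp [edgeSteps, Set.insert_subset_iff]

end TriangulatedTorus

section ZMod

open AddSubgroup

theorem zmultiples_natCast_sup {R : Type*} [AddGroupWithOne R] (m n : ℕ) :
    zmultiples (m : R) ⊔ zmultiples (n : R) = zmultiples ((m.gcd n : ℕ) : R) := by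
  simpa [AddSubgroup.map_sup, AddMonoidHom.map_zmultiples] using
    congrArg (AddSubgroup.map (Int.castAddHom R)) (Int.zmultiples_sup m n)

theorem zmod_zmultiples_sup (k l j : ℕ) :
    zmultiples (l : ZMod k) ⊔ zmultiples (j : ZMod k) =
      zmultiples ((l.gcd (j.gcd k) : ℕ) : ZMod k) := by
  rw [← zmultiples_natCast_sup, ← zmultiples_natCast_sup, ZMod.natCast_self, zmultiples_zero_eq_bot,
    sup_bot_eq]

theorem zmod_index_zmultiples (k m : ℕ) : (zmultiples (m : ZMod k)).index = m.gcd k := by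
  have hmap : zmultiples (m : ZMod k) = (zmultiples (m : ℤ)).map (Int.castAddHom (ZMod k)) := by
    simp [AddMonoidHom.map_zmultiples]
  rw [hmap, index_map, AddMonoidHom.range_eq_top_of_surjective _ ZMod.intCast_surjective,
    index_top, mul_one, ZMod.ker_intCastAddHom, Int.zmultiples_sup, Int.index_zmultiples,
    Int.natAbs_natCast, Int.gcd_natCast_natCast]

theorem zmod_card_zmultiples {k : ℕ} [NeZero k] (m : ℕ) :
    Nat.card (zmultiples (m : ZMod k)) = k / m.gcd k := by
  rw [Nat.card_zmultiples, ZMod.addOrderOf_coe _ (NeZero.ne k), Nat.gcd_comm]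

theorem zmod_natCast_sub {k n : ℕ} (h : n ≤ k) : ((k - n : ℕ) : ZMod k) = -n := by
  rw [Nat.cast_sub h, ZMod.natCast_self, zero_sub]

theorem isGeneric_natCast {k l j : ℕ} (hl : 0 < l) (hlj : l < j) (hj : l + 2 * j < k)
    (hk : 2 * (l + j) ≠ k) : IsGeneric (l : ZMod k) (j : ZMod k) := by
  have hnodup : [0, l, j, l + j, k - l, k - j, k - (l + j)].Nodup := by
    simp only [List.nodup_cons, List.mem_cons, List.not_mem_nil, or_false, not_or, Nat.left_eq_add,
      Nat.right_eq_add, not_false_eq_true, List.nodup_nil, and_self, and_true]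
    omega
  have hlt : ∀ n ∈ [0, l, j, l + j, k - l, k - j, k - (l + j)], n < k := by grind
  have hcast := hnodup.map_on (f := ((↑) : ℕ → ZMod k)) fun m hm n hn hmn => by
    rwa [ZMod.natCast_eq_natCast_iff', Nat.mod_eq_of_lt (hlt m hm), Nat.mod_eq_of_lt (hlt n hn)]
      at hmn
  have hl' : l ≤ k := by omega
  have hj' : j ≤ k := by omega
  have hlj' : l + j ≤ k := by omega
  simpa [IsGeneric, zmod_natCast_sub, hl', hj', hlj'] using hcast

theorem link_natCast {k l j : ℕ} (h : l + j ≤ k) :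
    ({(l : ZMod k), (j : ZMod k), ((l + j : ℕ) : ZMod k), ((k - l : ℕ) : ZMod k),
      ((k - j : ℕ) : ZMod k), ((k - l - j : ℕ) : ZMod k)} : Finset (ZMod k)) = link ↑l ↑j := by
  rw [link, Nat.sub_sub, zmod_natCast_sub (Nat.le_of_add_right_le h),
    zmod_natCast_sub (Nat.le_of_add_left_le h), zmod_natCast_sub h, Nat.cast_add]

theorem Sljk_eq_triangles {k l j : ℕ} (h : l + j ≤ k) :
    Sljk k l j = triangles (l : ZMod k) (j : ZMod k) := by
  have hcast : ((k - l - j : ℕ) : ZMod k) = -(l + j) := by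
    rw [Nat.sub_sub, zmod_natCast_sub h, Nat.cast_add]
  have hfirst : dc k l j = Set.range (triangle (l : ZMod k) j) :=
    Set.ext fun s => exists_congr fun i => eq_comm
  have hsecond : dc k l (k - l - j) = Set.range (triangle (j : ZMod k) l) := by
    refine Set.ext fun s => (Equiv.subRight (j : ZMod k)).exists_congr fun i => ?_
    have hlast : i + l + -((l : ZMod k) + j) = i - j := by abel
    rw [hcast, hlast, Equiv.subRight_apply, triangle, sub_add_cancel, Finset.insert_comm (i - _),
      Finset.pair_comm (i - _), eq_comm]
  rw [Sljk, triangles, hfirst, hsecond]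

theorem cGraph_triangles_eq_addCayley {k : ℕ} (a b : ZMod k) :
    cGraph k (triangles a b) = SimpleGraph.addCayley (edgeSteps a b : Set (ZMod k)) := by
  ext x y
  rw [addCayley_edgeSteps_adj, cGraph, SimpleGraph.fromRel_adj]
  refine and_congr_right fun hxy => ?_
  have hsymm : (∃ s ∈ triangles a b, y ∈ s ∧ x ∈ s) ↔ ∃ s ∈ triangles a b, x ∈ s ∧ y ∈ s := by
    simp only [and_comm]
  rw [hsymm, or_self, exists_mem_triangles_iff_sub_mem_link hxy]

end ZMod

theorem stmt_17_general (k l j m : ℕ) (hk : 2 * (l + j) ≠ k)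
    (hl : 0 < l) (hlj : l < j) (hj : l + 2 * j < k)
    (hm : m = Nat.gcd l (Nat.gcd j k)) :
    let V : Finset (ZMod k) :=
      {(l : ZMod k), (j : ZMod k), ((l + j : ℕ) : ZMod k),
       ((k - l : ℕ) : ZMod k), ((k - j : ℕ) : ZMod k), ((k - l - j : ℕ) : ZMod k)}
    (∀ v : ZMod k, {w : ZMod k | (cGraph k (Sljk k l j)).Adj v w}.ncard = 6) ∧
    V.card = 6 ∧ (0 : ZMod k) ∉ V ∧
    {w : ZMod k | (cGraph k (Sljk k l j)).Adj 0 w} = ↑V ∧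
    (∀ e : Finset (ZMod k), e.card = 2 → (∃ s ∈ Sljk k l j, e ⊆ s) →
      {s ∈ Sljk k l j | e ⊆ s}.ncard = 2) ∧
    (Sljk k l j).ncard = 2 * k ∧
    {e : Finset (ZMod k) | e.card = 2 ∧ ∃ s ∈ Sljk k l j, e ⊆ s}.ncard = 3 * k ∧
    (k : ℤ) - (3 * k : ℤ) + (2 * k : ℤ) = 0 ∧
    Nat.card (cGraph k (Sljk k l j)).ConnectedComponent = m ∧
    (∀ c : (cGraph k (Sljk k l j)).ConnectedComponent,
      Nat.card {v : ZMod k // (cGraph k (Sljk k l j)).connectedComponentMk v = c} = k / m) ∧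
    (∀ c c' : (cGraph k (Sljk k l j)).ConnectedComponent,
      ∃ φ : ZMod k ≃ ZMod k,
        (∀ s : Finset (ZMod k), s ∈ Sljk k l j ↔ s.image φ ∈ Sljk k l j) ∧
        (∀ v : ZMod k, (cGraph k (Sljk k l j)).connectedComponentMk v = c →
          (cGraph k (Sljk k l j)).connectedComponentMk (φ v) = c')) := by
  intro V
  have : NeZero k := ⟨by omega⟩
  have hgen : IsGeneric (l : ZMod k) j := isGeneric_natCast hl hlj hj hk
  have hS : Sljk k l j = triangles (l : ZMod k) j := Sljk_eq_triangles (by omega)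
  have hV : V = link (l : ZMod k) j := link_natCast (by omega)
  have hclosure : AddSubgroup.closure (edgeSteps (l : ZMod k) j : Set (ZMod k)) =
      AddSubgroup.zmultiples (m : ZMod k) := by
    rw [closure_edgeSteps, zmod_zmultiples_sup, hm]
  have hmk : m ∣ k := hm ▸ (Nat.gcd_dvd_right _ _).trans (Nat.gcd_dvd_right _ _)
  rw [hS, cGraph_triangles_eq_addCayley, hV]
  refine ⟨hgen.ncard_addCayley_edgeSteps_adj, hgen.card_link, hgen.zero_notMem_link, ?_,
    fun e he hes => hgen.ncard_triangles_of_subset he hes, ?_, ?_, by ring, ?_, fun c => ?_,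
    fun c c' => ?_⟩
  · ext w
    simp [hgen.addCayley_edgeSteps_adj_iff]
  · rw [hgen.ncard_triangles, Nat.card_zmod]
  · rw [hgen.ncard_edges, Nat.card_zmod]
  · rw [addCayley_card_connectedComponent, hclosure, zmod_index_zmultiples, Nat.gcd_eq_left hmk]
  · rw [addCayley_card_connectedComponentMk_eq, hclosure, zmod_card_zmultiples,
      Nat.gcd_eq_left hmk]
  · obtain ⟨t, ht⟩ := addCayley_exists_addLeft_connectedComponentMk c c'
    exact ⟨Equiv.addLeft t, fun s => (image_add_left_mem_triangles_iff t).symm, ht⟩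

/-- For odd `k` and `0 < l < j < k−l−j`, `m = gcd(l, j, k)`: every vertex of `S_{l,j,k}`
has exactly 6 neighbours (for `0` these are `l, j, l+j, k−l, k−j, k−l−j`, pairwise
distinct and nonzero), each edge lies in exactly two triangles, there are `2k`
triangles and `3k` edges (so `χ = k − 3k + 2k = 0`), and there are exactly `m`
connected components with `k/m` vertices each, pairwise combinatorially isomorphic. -/
theorem stmt_17 (k l j m : ℕ) (hodd : Odd k)
    (hl : 0 < l) (hlj : l < j) (hj : l + 2 * j < k)
    (hm : m = Nat.gcd l (Nat.gcd j k)) :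
    let V : Finset (ZMod k) :=
      {(l : ZMod k), (j : ZMod k), ((l + j : ℕ) : ZMod k),
       ((k - l : ℕ) : ZMod k), ((k - j : ℕ) : ZMod k), ((k - l - j : ℕ) : ZMod k)}
    (∀ v : ZMod k, {w : ZMod k | (cGraph k (Sljk k l j)).Adj v w}.ncard = 6) ∧
    V.card = 6 ∧ (0 : ZMod k) ∉ V ∧
    {w : ZMod k | (cGraph k (Sljk k l j)).Adj 0 w} = ↑V ∧
    (∀ e : Finset (ZMod k), e.card = 2 → (∃ s ∈ Sljk k l j, e ⊆ s) →
      {s ∈ Sljk k l j | e ⊆ s}.ncard = 2) ∧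
    (Sljk k l j).ncard = 2 * k ∧
    {e : Finset (ZMod k) | e.card = 2 ∧ ∃ s ∈ Sljk k l j, e ⊆ s}.ncard = 3 * k ∧
    (k : ℤ) - (3 * k : ℤ) + (2 * k : ℤ) = 0 ∧
    Nat.card (cGraph k (Sljk k l j)).ConnectedComponent = m ∧
    (∀ c : (cGraph k (Sljk k l j)).ConnectedComponent,
      Nat.card {v : ZMod k // (cGraph k (Sljk k l j)).connectedComponentMk v = c} = k / m) ∧
    (∀ c c' : (cGraph k (Sljk k l j)).ConnectedComponent,
      ∃ φ : ZMod k ≃ ZMod k,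
        (∀ s : Finset (ZMod k), s ∈ Sljk k l j ↔ s.image φ ∈ Sljk k l j) ∧
        (∀ v : ZMod k, (cGraph k (Sljk k l j)).connectedComponentMk v = c →
          (cGraph k (Sljk k l j)).connectedComponentMk (φ v) = c')) := by
  exact stmt_17_general k l j m (fun h => Nat.not_even_iff_odd.2 hodd (h ▸ even_two_mul _))
    hl hlj hj hm
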